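/- Equality of utilities under an irrelevant hidden-object prior. Let u be an utterance, C a finset of objects, o^t ∈ C a target with ℒ u o^t = 1, cost : 𝒰 → ℝ a cost function, and P a hidden-object prior such that every object o with P(o) > 0 satisfies o ∈ C or ℒ u o = 0. Then U_asym(u) = U_ego(u); that is, when no possible hidden object outside the shared context can match the utterance, the asymmetric utility coincides with the egocentric utility. -/

import Mathlib

open Finset Real

noncomputable section

/-- Literal listener: `L0 ℒ C u o = ℒ u o / ∑ o' ∈ C, ℒ u o'`. -/
def L0 {O 𝒰 : Type*} (ℒ : 𝒰 → O → ℝ) (C : Finset O) (u : 𝒰) (o : O) : ℝ :=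
  ℒ u o / ∑ o' ∈ C, ℒ u o'

/-- Egocentric utility. -/
def Uego {O 𝒰 : Type*} (ℒ : 𝒰 → O → ℝ) (C : Finset O) (oT : O) (cost : 𝒰 → ℝ) (u : 𝒰) : ℝ :=
  Real.log (L0 ℒ C u oT) - cost u

/-- Asymmetric (occlusion-sensitive) utility. -/
def Uasym {O 𝒰 : Type*} [DecidableEq O] [Fintype O] (ℒ : 𝒰 → O → ℝ) (C : Finset O) (oT : O)
    (P : O → ℝ) (cost : 𝒰 → ℝ) (u : 𝒰) : ℝ :=
  (∑ oh : O, P oh * Real.log (L0 ℒ (insert oh C) u oT)) - cost u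

theorem sum_mul_eq_of_sum_eq_one {ι R : Type*} [Fintype ι] [NonAssocSemiring R] {w f : ι → R}
    {c : R} (hw : ∑ i, w i = 1) (hf : ∀ i, w i ≠ 0 → f i = c) : ∑ i, w i * f i = c := by
  have weighted_eq (i : ι) : w i * f i = w i * c := by
    by_cases hi : w i = 0
    · rw [hi, zero_mul, zero_mul]
    · rw [hf i hi]
  calc ∑ i, w i * f i = ∑ i, w i * c := sum_congr rfl fun i _ => weighted_eq i
    _ = c := by rw [← sum_mul, hw, one_mul]

section LiteralListener

variable {O 𝒰 : Type*} {ℒ : 𝒰 → O → ℝ} {C : Finset O} {u : 𝒰} {o : O}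

theorem L0_pos (hL : ∀ o' ∈ C, 0 ≤ ℒ u o') (hoC : o ∈ C) (ho : 0 < ℒ u o) : 0 < L0 ℒ C u o :=
  div_pos ho (sum_pos' hL ⟨o, hoC, ho⟩)

theorem L0_insert_of_mem_or_eq_zero [DecidableEq O] (ho : o ∈ C ∨ ℒ u o = 0) :
    L0 ℒ (insert o C) u = L0 ℒ C u := by
  funext o'
  rw [L0, L0, sum_insert_of_eq_zero_if_notMem ho.resolve_left]

end LiteralListener

theorem Uasym_eq_Uego_of_irrelevant_prior_general
    {O 𝒰 : Type*} [DecidableEq O] [Fintype O]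
    (ℒ : 𝒰 → O → ℝ) (u : 𝒰) (C : Finset O) (oT : O) (_hpos : 0 < L0 ℒ C u oT)
    (cost : 𝒰 → ℝ)
    (P : O → ℝ) (hP : ∀ o, 0 ≤ P o) (hPsum : ∑ o : O, P o = 1)
    (hPsupp : ∀ o, 0 < P o → o ∈ C ∨ ℒ u o = 0) :
    Uasym ℒ C oT P cost u = Uego ℒ C oT cost u := by
  have log_L0_insert (o : O) (ho : P o ≠ 0) :
      Real.log (L0 ℒ (insert o C) u oT) = Real.log (L0 ℒ C u oT) := by
    rw [L0_insert_of_mem_or_eq_zero (hPsupp o ((hP o).lt_of_ne' ho))]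
  rw [Uasym, Uego, sum_mul_eq_of_sum_eq_one hPsum log_L0_insert]

/-- Equality of utilities under an irrelevant hidden-object prior. -/
theorem Uasym_eq_Uego_of_irrelevant_prior
    {O 𝒰 : Type*} [DecidableEq O] [Fintype O]
    (ℒ : 𝒰 → O → ℝ) (hL : ∀ u o, ℒ u o = 0 ∨ ℒ u o = 1)
    (u : 𝒰) (C : Finset O) (oT : O) (hoT : oT ∈ C) (ht : ℒ u oT = 1)
    (cost : 𝒰 → ℝ)
    (P : O → ℝ) (hP : ∀ o, 0 ≤ P o) (hPsum : ∑ o : O, P o = 1)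
    (hPsupp : ∀ o, 0 < P o → o ∈ C ∨ ℒ u o = 0) :
    Uasym ℒ C oT P cost u = Uego ℒ C oT cost u :=
  Uasym_eq_Uego_of_irrelevant_prior_general ℒ u C oT
    (L0_pos (fun o _ => (hL u o).elim Eq.ge fun h => h ▸ zero_le_one) hoT (ht ▸ one_pos))
    cost P hP hPsum hPsupp

end
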